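/- Let G be a finite perfect graph with vertex set V and let w : V → ℕ be an integer weight function. Then there exists an integer-valued function y on the cliques of G with y(Q) ∈ ℕ for every clique Q and ∑_{Q ∋ v} y(Q) ≥ w(v) for every vertex v, such that ∑_Q y(Q) equals the maximum of ∑_{v ∈ O} w(v) over all stable sets O of G. In other words, the linear system {x ≥ 0, ∑_{v ∈ Q} x_v ≤ 1 for every clique Q of G} is totally dual integral. -/

import Mathlib

/-!
The proof is Lovász's argument for the weak perfect graph theorem, carried out with integer
weights in place of vertex replication.

* `exists_stable_cover`: if every clique of a perfect graph has `h`-weight at most `k`, then `k`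
  stable sets cover every vertex `v` at least `h v` times. For `0/1` weights this is perfection of
  the induced subgraph on the support; larger weights are reduced one unit at a time.
* `exists_clique_meeting`: some clique meets all stable sets of maximum positive weight `k + 1`.
  Otherwise choose for each of the `N` cliques a maximum stable set disjoint from it, and let `h`
  count how often a vertex is chosen. Every clique has `h`-weight at most `N - 1`, so the chosen
  `N` stable sets could be replaced by `N - 1` stable sets covering at least as much; comparing
  total `w`-weights gives `N * (k + 1) ≤ (N - 1) * (k + 1)`, a contradiction.
* `exists_clique_cover`: removing such a clique from the weights lowers the maximum weight of a
  stable set, so induction yields a cover by as many cliques as that maximum.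
-/

open Finset

/-- `O` is a stable (independent) set in `G`. -/
def IsStableSet {V : Type*} (G : SimpleGraph V) (O : Finset V) : Prop :=
  ∀ u ∈ O, ∀ v ∈ O, ¬ G.Adj u v

/-- `Q` is a clique in `G`. -/
def IsCliqueF {V : Type*} (G : SimpleGraph V) (Q : Finset V) : Prop :=
  ∀ u ∈ Q, ∀ v ∈ Q, u ≠ v → G.Adj u v

/-- `Q` is a maximal clique in `G`. -/
def IsMaximalCliqueF {V : Type*} (G : SimpleGraph V) (Q : Finset V) : Prop :=
  IsCliqueF G Q ∧ ∀ Q', IsCliqueF G Q' → Q ⊆ Q' → Q' = Q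

open Classical in
/-- The set of maximal cliques of `G`. -/
noncomputable def maximalCliques {V : Type*} (G : SimpleGraph V) [Fintype V] :
    Finset (Finset V) :=
  univ.powerset.filter (IsMaximalCliqueF G)

open Classical in
/-- The set of all cliques of `G`. -/
noncomputable def cliques {V : Type*} (G : SimpleGraph V) [Fintype V] :
    Finset (Finset V) :=
  univ.powerset.filter (IsCliqueF G)

open Classical in
/-- `cost S` : maximum weight of a stable set contained in `S`. -/
noncomputable def cost {V : Type*} (G : SimpleGraph V) [Fintype V] (w : V → ℚ)
    (S : Finset V) : ℚ :=
  (S.powerset.filter (IsStableSet G)).sup'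
    ⟨∅, by simp [IsStableSet]⟩ (fun O => ∑ v ∈ O, w v)

open Classical in
/-- Integer version of `cost`. -/
noncomputable def costNat {V : Type*} (G : SimpleGraph V) [Fintype V] (w : V → ℕ)
    (S : Finset V) : ℕ :=
  (S.powerset.filter (IsStableSet G)).sup'
    ⟨∅, by simp [IsStableSet]⟩ (fun O => ∑ v ∈ O, w v)

open Classical in
/-- `money y S` : total dual weight of the maximal cliques intersecting `S`. -/
noncomputable def money {V : Type*} (G : SimpleGraph V) [Fintype V]
    (y : Finset V → ℚ) (S : Finset V) : ℚ :=
  ∑ Q ∈ (maximalCliques G).filter (fun Q => (Q ∩ S).Nonempty), y Q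

/-- `G` is a perfect graph: for every induced subgraph, the clique number
equals the chromatic number. -/
def IsPerfect {V : Type*} (G : SimpleGraph V) [Fintype V] : Prop :=
  ∀ S : Finset V,
    ((G.induce (S : Set V)).cliqueNum : ℕ∞) = (G.induce (S : Set V)).chromaticNumber

lemma IsStableSet.mono {V : Type*} {G : SimpleGraph V} {S T : Finset V}
    (hT : IsStableSet G T) (h : S ⊆ T) : IsStableSet G S :=
  fun u hu v hv => hT u (h hu) v (h hv)

open Classical in
/-- A stable set and a clique share at most one vertex; the intersection size is written as a
sum of indicators, the form in which double counting uses it. -/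
lemma sum_indicator_le_one {V : Type*} {G : SimpleGraph V} {Q T : Finset V}
    (hQ : IsCliqueF G Q) (hT : IsStableSet G T) :
    ∑ v ∈ Q, (if v ∈ T then 1 else 0) ≤ 1 := by
  rw [← Finset.card_filter, Finset.card_le_one]
  intro a ha b hb
  rw [Finset.mem_filter] at ha hb
  by_contra hab
  exact hT a ha.2 b hb.2 (hQ a ha.1 b hb.1 hab)

open Classical in
/-- The case of `0/1` weights: an induced subgraph of a perfect graph with no clique of more than
`k` vertices is a union of `k` stable sets. -/
lemma exists_stable_cover_of_le_one {V : Type*} [Fintype V] (G : SimpleGraph V)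
    (hG : IsPerfect G) (k : ℕ) (h : V → ℕ) (h1 : ∀ v, h v ≤ 1)
    (hk : ∀ Q, IsCliqueF G Q → ∑ v ∈ Q, h v ≤ k) :
    ∃ T : Fin k → Finset V, (∀ i, IsStableSet G (T i)) ∧
      ∀ v, h v ≤ ∑ i, if v ∈ T i then 1 else 0 := by
  set S : Finset V := univ.filter (fun v => h v = 1) with hS
  have hcl : (G.induce (S : Set V)).cliqueNum ≤ k := by
    obtain ⟨s, hs⟩ := (G.induce (S : Set V)).exists_isNClique_cliqueNum
    rw [← hs.card_eq]
    have hc := hs.isClique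
    have := hk (s.map (Function.Embedding.subtype _)) (by
      intro u hu v hv huv
      simp only [Finset.mem_map, Function.Embedding.coe_subtype] at hu hv
      obtain ⟨a, ha, rfl⟩ := hu
      obtain ⟨b, hb, rfl⟩ := hv
      exact hc ha hb (fun e => huv (by rw [e])))
    rw [Finset.sum_map] at this
    refine le_trans ?_ this
    rw [Finset.card_eq_sum_ones]
    refine Finset.sum_le_sum fun a _ => ?_
    have := a.2
    simp only [hS, Finset.coe_filter, Finset.mem_univ, true_and, Set.mem_ofPred_eq] at this
    exact this.ge
  have hcol : (G.induce (S : Set V)).Colorable k := by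
    rw [← SimpleGraph.chromaticNumber_le_iff_colorable, ← hG S]
    exact_mod_cast hcl
  obtain ⟨C⟩ := hcol
  refine ⟨fun i => univ.filter (fun v => ∃ hv : v ∈ (S : Set V), C ⟨v, hv⟩ = i), ?_, ?_⟩
  · intro i u hu v hv huv
    simp only [Finset.mem_filter, Finset.mem_univ, true_and] at hu hv
    obtain ⟨hu, hu'⟩ := hu
    obtain ⟨hv, hv'⟩ := hv
    exact C.valid (v := ⟨u, hu⟩) (w := ⟨v, hv⟩) huv (hu'.trans hv'.symm)
  · intro v
    rcases Nat.eq_zero_or_pos (h v) with h0 | hpos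
    · omega
    have hv : v ∈ (S : Set V) := by
      simp only [hS, Finset.coe_filter, Finset.mem_univ, true_and, Set.mem_ofPred_eq]
      have := h1 v
      omega
    refine (h1 v).trans ?_
    refine le_trans ?_ (Finset.single_le_sum (fun _ _ => Nat.zero_le _)
      (Finset.mem_univ (C ⟨v, hv⟩)))
    rw [if_pos]
    exact Finset.mem_filter.2 ⟨Finset.mem_univ _, hv, rfl⟩

open Classical in
/-- Weighted form of the replication lemma: if no clique has `h`-weight above `k`, then `k`
stable sets cover each vertex `v` at least `h v` times. The number `n` is only a bound on the
total weight, used for the induction. -/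
lemma exists_stable_cover {V : Type*} [Fintype V] (G : SimpleGraph V)
    (hG : IsPerfect G) (n : ℕ) : ∀ (k : ℕ) (h : V → ℕ), ∑ v, h v ≤ n →
    (∀ Q, IsCliqueF G Q → ∑ v ∈ Q, h v ≤ k) →
    ∃ T : Fin k → Finset V, (∀ i, IsStableSet G (T i)) ∧
      ∀ v, h v ≤ ∑ i, if v ∈ T i then 1 else 0 := by
  induction n with
  | zero =>
    intro k h hn hk
    refine exists_stable_cover_of_le_one G hG k h (fun v => ?_) hk
    have := Finset.single_le_sum (f := h) (fun _ _ => Nat.zero_le _) (Finset.mem_univ v)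
    omega
  | succ n ih =>
    intro k h hn hk
    by_cases h1 : ∀ v, h v ≤ 1
    · exact exists_stable_cover_of_le_one G hG k h h1 hk
    push Not at h1
    obtain ⟨v, hv⟩ := h1
    -- Lower the weight of `v` by one and cover the result, `h'`, by `k` stable sets.
    set h' : V → ℕ := fun u => h u - if u = v then 1 else 0 with hh'
    have hle' : ∀ u, h' u ≤ h u := fun u => Nat.sub_le _ _
    have hlt' : ∑ u, h' u < ∑ u, h u :=
      Finset.sum_lt_sum (fun u _ => hle' u) ⟨v, Finset.mem_univ v, by simp [hh']; omega⟩
    obtain ⟨T, hT, hcov⟩ := ih k h' (by omega)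
      (fun Q hQ => (Finset.sum_le_sum fun u _ => hle' u).trans (hk Q hQ))
    -- Since `h' v ≥ 1`, one of these stable sets contains `v`.
    obtain ⟨i, hi⟩ : ∃ i, v ∈ T i := by
      by_contra hno
      push Not at hno
      have := hcov v
      simp [hno, hh'] at this
      omega
    obtain ⟨m, rfl⟩ : ∃ m, k = m + 1 :=
      Nat.exists_eq_succ_of_ne_zero (by rintro rfl; exact i.elim0)
    -- Removing `T i` from the weights `h` lowers the weight of every heaviest clique.
    set h'' : V → ℕ := fun u => h u - if u ∈ T i then 1 else 0 with hh''
    have hle'' : ∀ u, h'' u ≤ h u := fun u => Nat.sub_le _ _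
    have hlt'' : ∑ u, h'' u < ∑ u, h u :=
      Finset.sum_lt_sum (fun u _ => hle'' u) ⟨v, Finset.mem_univ v, by simp [hh'', hi]; omega⟩
    obtain ⟨T', hT', hcov'⟩ := ih m h'' (by omega) (by
      intro Q hQ
      suffices hs : ∑ u ∈ Q, h'' u < m + 1 by omega
      by_contra hge
      push Not at hge
      have hQk := hk Q hQ
      have hQle : ∑ u ∈ Q, h'' u ≤ ∑ u ∈ Q, h u := Finset.sum_le_sum fun u _ => hle'' u
      have heq : ∑ u ∈ Q, h'' u = ∑ u ∈ Q, h u := by omega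
      -- No weight is lost on `Q`, so `T i` meets `Q` only in vertices of weight zero.
      have hpt := (Finset.sum_eq_sum_iff_of_le (fun u _ => hle'' u)).1 heq
      have hzero : ∀ u ∈ Q, u ∈ T i → h u = 0 := by
        intro u hu hui
        have := hpt u hu
        simp only [hh'', hui, if_true] at this
        omega
      have hvQ : v ∉ Q := fun hvQ => by
        have := hzero v hvQ hi
        omega
      have heq' : ∑ u ∈ Q, h' u = m + 1 := by
        rw [← le_antisymm hQk (hge.trans hQle)]
        refine Finset.sum_congr rfl fun u hu => ?_
        have : u ≠ v := fun e => hvQ (e ▸ hu)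
        simp [hh', this]
      -- Hence the other `m` stable sets alone cover the weight `m + 1` of `Q`.
      have hb : ∑ u ∈ Q, h' u ≤ ∑ u ∈ Q, ∑ j ∈ univ.erase i, if u ∈ T j then 1 else 0 := by
        refine Finset.sum_le_sum fun u hu => ?_
        by_cases hui : u ∈ T i
        · have := hzero u hu hui
          have := hle' u
          omega
        · have := hcov u
          rw [← Finset.add_sum_erase _ _ (Finset.mem_univ i), if_neg hui, zero_add] at this
          exact this
      rw [Finset.sum_comm] at hb
      have hb' := hb.trans (Finset.sum_le_card_nsmul _ _ 1
        fun j _ => sum_indicator_le_one hQ (hT j))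
      simp at hb'
      omega)
    refine ⟨Fin.cons (T i) T', ?_, ?_⟩
    · intro j
      refine Fin.cases ?_ (fun j => ?_) j
      · exact hT i
      · exact hT' j
    · intro u
      have := hcov' u
      rw [Fin.sum_univ_succ]
      simp only [Fin.cons_zero, Fin.cons_succ]
      simp only [hh''] at this
      omega

open Classical in
/-- If `k + 1` bounds the weight of every stable set, some clique meets all stable sets attaining
the bound. -/
lemma exists_clique_meeting {V : Type*} [Fintype V] (G : SimpleGraph V)
    (hG : IsPerfect G) (k : ℕ) (w : V → ℕ)
    (hw : ∀ O, IsStableSet G O → ∑ v ∈ O, w v ≤ k + 1) :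
    ∃ Q, IsCliqueF G Q ∧ ∀ O, IsStableSet G O → ∑ v ∈ O, w v = k + 1 → ∃ u ∈ O, u ∈ Q := by
  by_contra hno
  push Not at hno
  choose! S hSst hSw hSd using hno
  have hmem : ∀ Q, Q ∈ cliques G ↔ IsCliqueF G Q := fun Q => by simp [cliques]
  obtain ⟨N, hN⟩ : ∃ N, #(cliques G) = N + 1 := by
    refine Nat.exists_eq_succ_of_ne_zero (Finset.card_ne_zero_of_mem ((hmem ∅).2 ?_))
    intro u hu
    simp at hu
  set h : V → ℕ := fun v => ∑ Q ∈ cliques G, if v ∈ S Q then 1 else 0 with hh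
  obtain ⟨T, hT, hcov⟩ := exists_stable_cover G hG _ N h le_rfl (by
    intro Q hQ
    simp only [hh]
    rw [Finset.sum_comm, ← Finset.add_sum_erase _ _ ((hmem Q).2 hQ)]
    have h0 : ∑ v ∈ Q, (if v ∈ S Q then 1 else 0) = 0 :=
      Finset.sum_eq_zero fun v hv => if_neg fun hvS => hSd Q hQ v hvS hv
    rw [h0, zero_add]
    refine (Finset.sum_le_card_nsmul _ _ 1 fun R hR => sum_indicator_le_one hQ
      (hSst R ((hmem R).1 (Finset.mem_of_mem_erase hR)))).trans ?_
    rw [Finset.card_erase_of_mem ((hmem Q).2 hQ), hN]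
    simp)
  have hind : ∀ O : Finset V, ∑ v, w v * (if v ∈ O then 1 else 0) = ∑ v ∈ O, w v := by
    intro O
    simp
  have e1 : ∑ v, w v * h v = (N + 1) * (k + 1) := by
    simp only [hh, Finset.mul_sum]
    rw [Finset.sum_comm, Finset.sum_congr rfl fun Q hQ => (hind (S Q)).trans
      (hSw Q ((hmem Q).1 hQ)), Finset.sum_const, hN, smul_eq_mul]
  have e2 : ∑ v, w v * h v ≤ N * (k + 1) := by
    calc ∑ v, w v * h v ≤ ∑ v, w v * ∑ i, (if v ∈ T i then 1 else 0) :=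
          Finset.sum_le_sum fun v _ => Nat.mul_le_mul_left _ (hcov v)
      _ = ∑ i, ∑ v ∈ T i, w v := by
          simp only [Finset.mul_sum]
          rw [Finset.sum_comm]
          exact Finset.sum_congr rfl fun i _ => hind (T i)
      _ ≤ ∑ _i : Fin N, (k + 1) := Finset.sum_le_sum fun i _ => hw _ (hT i)
      _ = N * (k + 1) := by simp
  rw [e1] at e2
  have := Nat.le_of_mul_le_mul_right e2 (Nat.succ_pos k)
  omega

open Classical in
/-- If `k` bounds the weight of every stable set, then `k` cliques, counted with the multiplicity
`y`, cover every vertex `v` at least `w v` times. -/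
lemma exists_clique_cover {V : Type*} [Fintype V] (G : SimpleGraph V)
    (hG : IsPerfect G) (k : ℕ) : ∀ (w : V → ℕ),
    (∀ O, IsStableSet G O → ∑ v ∈ O, w v ≤ k) →
    ∃ y : Finset V → ℕ,
      (∀ v : V, w v ≤ ∑ Q ∈ (cliques G).filter (fun Q => v ∈ Q), y Q) ∧
      ∑ Q ∈ cliques G, y Q = k := by
  induction k with
  | zero =>
    intro w hw
    refine ⟨0, fun v => ?_, by simp⟩
    have := hw {v} (by simp [IsStableSet])
    simp at this
    omega
  | succ k ih =>
    intro w hw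
    obtain ⟨Q, hQ, hmeet⟩ := exists_clique_meeting G hG k w hw
    have hQm : Q ∈ cliques G := by simp [cliques, hQ]
    set w' : V → ℕ := fun u => w u - if u ∈ Q then 1 else 0 with hw'
    have hle : ∀ u, w' u ≤ w u := fun u => Nat.sub_le _ _
    obtain ⟨y, hy, hys⟩ := ih w' (by
      intro O hO
      by_contra hgt
      push Not at hgt
      have h1 := hw O hO
      have h2 : ∑ v ∈ O, w' v ≤ ∑ v ∈ O, w v := Finset.sum_le_sum fun u _ => hle u
      have hpt := (Finset.sum_eq_sum_iff_of_le (fun u _ => hle u)).1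
        (show ∑ v ∈ O, w' v = ∑ v ∈ O, w v by omega)
      -- The clique must meet `O` in a vertex of positive weight, so zero-weight vertices are
      -- discarded first.
      obtain ⟨u, hu, huQ⟩ := hmeet (O.filter fun v => w v ≠ 0)
        (hO.mono (Finset.filter_subset _ _)) (by rw [Finset.sum_filter_ne_zero]; omega)
      rw [Finset.mem_filter] at hu
      have := hpt u hu.1
      simp only [hw', huQ, if_true] at this
      omega)
    refine ⟨fun R => y R + if R = Q then 1 else 0, fun v => ?_, ?_⟩
    · have := hy v
      rw [Finset.sum_add_distrib, Finset.sum_ite_eq']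
      simp only [Finset.mem_filter, hQm, true_and]
      simp only [hw'] at this
      omega
    · rw [Finset.sum_add_distrib, hys, Finset.sum_ite_eq', if_pos hQm]

open Classical in
/-- For a finite perfect graph `G` and integer weights `w`, the
linear system with one constraint per clique is totally dual integral: there
is an integer-valued dual-feasible `y` on the cliques whose total value equals
the maximum weight of a stable set. -/
theorem clique_system_TDI {V : Type*} [Fintype V] (G : SimpleGraph V)
    (hG : IsPerfect G) (w : V → ℕ) :
    ∃ y : Finset V → ℕ,
      (∀ v : V, w v ≤ ∑ Q ∈ (cliques G).filter (fun Q => v ∈ Q), y Q) ∧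
      ∑ Q ∈ cliques G, y Q = costNat G w univ := by
  refine exists_clique_cover G hG _ w fun O hO => ?_
  exact Finset.le_sup' (fun O => ∑ v ∈ O, w v) (by simp [hO])
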